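/- arXiv:math/0703206 — 3 statements merged into one kernel-verified Lean document; each statement's English description precedes it below -/
import Mathlib

section
/- Let X ⊆ Σ^{ℤ^d} be a nonempty irreducible shift of finite type. Then the set of finite patterns that are globally admissible for X is decidable: there is a computable function which, given (an effective encoding of) a finite set E ⊆ ℤ^d and a pattern a : E → Σ, decides whether a is globally admissible for X. -/
open Filter Topology

/-- `X` is a shift of finite type: it is cut out by a finite shape `F` and a syntax `L ⊆ Σ^F`. -/
def IsSFT {A : Type} {d : ℕ} (X : Set ((Fin d → ℤ) → A)) : Prop :=
  ∃ (F : Finset (Fin d → ℤ)) (L : Set (F → A)),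
    X = {x | ∀ u : Fin d → ℤ, (fun v : F => x ((v : Fin d → ℤ) + u)) ∈ L}

/-- The pattern `a` (restricted to the set `E`) is globally admissible for `X`:
it is the restriction to `E` of a point of `X`. -/
def GloballyAdmissibleOn {A : Type} {d : ℕ} (X : Set ((Fin d → ℤ) → A))
    (E : Set (Fin d → ℤ)) (a : (Fin d → ℤ) → A) : Prop :=
  ∃ x ∈ X, ∀ v ∈ E, x v = a v

/-- Irreducibility: there is a gap `r > 0` such that any two globally admissible patterns
whose domains are at `ℓ∞`-distance at least `r` can be simultaneously extended
to a point of `X`. -/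
def IrreducibleShift {A : Type} {d : ℕ} (X : Set ((Fin d → ℤ) → A)) : Prop :=
  ∃ r : ℕ, 0 < r ∧
    ∀ (E₁ E₂ : Set (Fin d → ℤ)) (a b : (Fin d → ℤ) → A),
      (∀ u ∈ E₁, ∀ v ∈ E₂, ∃ i : Fin d, (r : ℤ) ≤ |u i - v i|) →
      GloballyAdmissibleOn X E₁ a → GloballyAdmissibleOn X E₂ b →
      ∃ x ∈ X, (∀ v ∈ E₁, x v = a v) ∧ (∀ v ∈ E₂, x v = b v)

set_option linter.unusedSectionVars false

section Helpers

variable {α β σ : Type} [Primcodable α] [Primcodable β] [Primcodable σ]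

theorem pp_all_mem {f : α → List β} {R : α → β → Prop} (hf : Primrec f)
    (hR : PrimrecPred fun p : α × β => R p.1 p.2) :
    PrimrecPred fun a => ∀ b ∈ f a, R a b := by
  have h : PrimrecRel (fun (b : β) (a : α) => R a b) :=
    PrimrecPred.comp hR (Primrec.pair Primrec.snd Primrec.fst)
  exact (h.forall_mem_list.comp hf Primrec.id)

theorem pp_ex_mem {f : α → List β} {R : α → β → Prop} (hf : Primrec f)
    (hR : PrimrecPred fun p : α × β => R p.1 p.2) :
    PrimrecPred fun a => ∃ b ∈ f a, R a b := by
  have h : PrimrecRel (fun (b : β) (a : α) => R a b) :=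
    PrimrecPred.comp hR (Primrec.pair Primrec.snd Primrec.fst)
  exact (h.exists_mem_list.comp hf Primrec.id)

theorem pp_all_lt {f : α → ℕ} {R : α → ℕ → Prop} (hf : Primrec f)
    (hR : PrimrecPred fun p : α × ℕ => R p.1 p.2) :
    PrimrecPred fun a => ∀ b < f a, R a b := by
  exact (pp_all_mem (Primrec.list_range.comp hf) hR).of_eq fun a => by simp

theorem pp_imp {p q : α → Prop} (hp : PrimrecPred p) (hq : PrimrecPred q) :
    PrimrecPred fun a => p a → q a :=
  (hp.not.or hq).of_eq fun a => by tauto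

theorem pp_map_const {h : α → β → σ} (L : List β) (hh : ∀ b, Primrec (fun a => h a b)) :
    Primrec fun a => L.map (h a) := by
  induction L with
  | nil => exact Primrec.const []
  | cons b L ih => exact Primrec.list_cons.comp (hh b) ih

theorem re_exists {R : α → ℕ → Prop} (hR : PrimrecPred fun p : α × ℕ => R p.1 p.2) :
    REPred fun a => ∃ n, R a n := by
  classical
  have h1 : Computable₂ (fun (a : α) (n : ℕ) => decide (R a n)) :=
    (hR.decide).to_comp
  have h2 := (Partrec.rfind h1.partrec₂).dom_re
  refine h2.of_eq fun a => ?_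
  rw [Nat.rfind_dom]
  simp

end Helpers

section Core

variable {A : Type} [Fintype A] [Primcodable A]

/-- All words of length `t`. -/
noncomputable def wordsOf (A : Type) [Fintype A] (t : ℕ) : List (List A) :=
  Nat.rec [[]] (fun _ W => W.flatMap fun w => (Finset.univ : Finset A).toList.map fun a => a :: w) t

theorem mem_wordsOf (t : ℕ) (y : List A) : y ∈ wordsOf A t ↔ y.length = t := by
  induction t generalizing y with
  | zero => simp [wordsOf]
  | succ t ih =>
    have : wordsOf A (t+1) = (wordsOf A t).flatMap
      fun w => (Finset.univ : Finset A).toList.map fun a => a :: w := rfl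
    rw [this]
    simp only [List.mem_flatMap, ih, List.mem_map, Finset.mem_toList, Finset.mem_univ, true_and]
    constructor
    · rintro ⟨w, hw, a, rfl⟩; simp [hw]
    · intro h
      cases y with
      | nil => simp at h
      | cons a w => exact ⟨w, by simpa using h, a, rfl⟩

theorem primrec_wordsOf : Primrec (wordsOf A) := by
  refine Primrec.nat_rec₁ (f := fun _ W => W.flatMap fun w =>
    (Finset.univ : Finset A).toList.map fun a => a :: w) [[]] ?_
  refine Primrec.list_flatMap Primrec.snd ?_
  exact Primrec.list_map (Primrec.const _)
    (Primrec.list_cons.comp Primrec.snd (Primrec.snd.comp Primrec.fst))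

/-- Points satisfying all the constraints. -/
def InX (g : ℕ → List (List (ℕ × A))) (x : ℕ → A) : Prop :=
  ∀ u, ∀ q ∈ g u, ∃ p ∈ q, x p.1 ≠ p.2

def AdmX (g : ℕ → List (List (ℕ × A))) (l : List (ℕ × A)) : Prop :=
  ∃ x, InX g x ∧ ∀ p ∈ l, x p.1 = p.2

def SatW (g : ℕ → List (List (ℕ × A))) (t : ℕ) (y : List A) : Prop :=
  ∀ u < t, ∀ q ∈ g u, ∃ p ∈ q, y[p.1]? ≠ some p.2

def AgreeW (y : List A) (l : List (ℕ × A)) : Prop :=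
  ∀ p ∈ l, y[p.1]? = some p.2

theorem primrec_SatW {g : ℕ → List (List (ℕ × A))} (hg : Primrec g) :
    PrimrecPred fun p : ℕ × List A => SatW g p.1 p.2 := by
  refine pp_all_lt Primrec.fst ?_
  refine pp_all_mem (hg.comp Primrec.snd) ?_
  refine pp_ex_mem Primrec.snd ?_
  refine PrimrecPred.not ?_
  refine Primrec.eq.comp ?_ ?_
  · exact Primrec.list_getElem?.comp
      (Primrec.snd.comp (Primrec.fst.comp (Primrec.fst.comp Primrec.fst)))
      (Primrec.fst.comp Primrec.snd)
  · exact Primrec.option_some.comp (Primrec.snd.comp Primrec.snd)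

theorem primrec_AgreeW : PrimrecPred fun p : List A × List (ℕ × A) => AgreeW p.1 p.2 := by
  refine pp_all_mem Primrec.snd ?_
  refine Primrec.eq.comp ?_ ?_
  · exact Primrec.list_getElem?.comp (Primrec.fst.comp Primrec.fst) (Primrec.fst.comp Primrec.snd)
  · exact Primrec.option_some.comp (Primrec.snd.comp Primrec.snd)

/-- Certificate of non-admissibility. -/
def CertN (g : ℕ → List (List (ℕ × A))) (l : List (ℕ × A)) (t : ℕ) : Prop :=
  (∀ p ∈ l, p.1 < t) ∧ ∀ y ∈ wordsOf A t, ¬ (SatW g t y ∧ AgreeW y l)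

/-- Certificate of admissibility. -/
def CertP (g : ℕ → List (List (ℕ × A))) (nb : ℕ → List ℕ) (l : List (ℕ × A)) (m t : ℕ) : Prop :=
  (∀ w < m, ∀ u ∈ nb w, u < t ∧ ∀ q ∈ g u, ∀ p ∈ q, p.1 < t) ∧
  ∀ y ∈ wordsOf A t, SatW g t y → ∃ y' ∈ wordsOf A t, (SatW g t y' ∧ AgreeW y' l) ∧
    ∀ i < t, m ≤ i → y'[i]? = y[i]?

theorem primrec_CertN {g : ℕ → List (List (ℕ × A))} (hg : Primrec g) :
    PrimrecPred fun p : List (ℕ × A) × ℕ => CertN g p.1 p.2 := by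
  refine PrimrecPred.and ?_ ?_
  · exact pp_all_mem Primrec.fst
      (Primrec.nat_lt.comp (Primrec.fst.comp Primrec.snd) (Primrec.snd.comp Primrec.fst))
  · refine pp_all_mem (primrec_wordsOf.comp Primrec.snd) (PrimrecPred.not (PrimrecPred.and ?_ ?_))
    · exact (primrec_SatW hg).comp (Primrec.pair (Primrec.snd.comp Primrec.fst) Primrec.snd)
    · exact primrec_AgreeW.comp (Primrec.pair Primrec.snd (Primrec.fst.comp Primrec.fst))

theorem primrec_CertP {g : ℕ → List (List (ℕ × A))} (hg : Primrec g) {nb : ℕ → List ℕ}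
    (hnb : Primrec nb) :
    PrimrecPred fun p : List (ℕ × A) × ℕ => CertP g nb p.1 p.2.unpair.1 p.2.unpair.2 := by
  have hm : Primrec fun p : List (ℕ × A) × ℕ => p.2.unpair.1 :=
    Primrec.fst.comp (Primrec.unpair.comp Primrec.snd)
  have ht : Primrec fun p : List (ℕ × A) × ℕ => p.2.unpair.2 :=
    Primrec.snd.comp (Primrec.unpair.comp Primrec.snd)
  refine PrimrecPred.and ?_ ?_
  · refine pp_all_lt hm (pp_all_mem (hnb.comp Primrec.snd) (PrimrecPred.and ?_ ?_))
    · exact Primrec.nat_lt.comp Primrec.snd (ht.comp (Primrec.fst.comp Primrec.fst))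
    · refine pp_all_mem (hg.comp Primrec.snd) (pp_all_mem Primrec.snd ?_)
      exact Primrec.nat_lt.comp (Primrec.fst.comp Primrec.snd)
        (ht.comp (Primrec.fst.comp (Primrec.fst.comp (Primrec.fst.comp Primrec.fst))))
  · refine pp_all_mem (primrec_wordsOf.comp ht) (pp_imp ?_ ?_)
    · exact (primrec_SatW hg).comp (Primrec.pair (ht.comp Primrec.fst) Primrec.snd)
    · refine pp_ex_mem (primrec_wordsOf.comp (ht.comp Primrec.fst))
        (PrimrecPred.and (PrimrecPred.and ?_ ?_) ?_)
      · exact (primrec_SatW hg).comp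
          (Primrec.pair (ht.comp (Primrec.fst.comp Primrec.fst)) Primrec.snd)
      · exact primrec_AgreeW.comp
          (Primrec.pair Primrec.snd (Primrec.fst.comp (Primrec.fst.comp Primrec.fst)))
      · refine pp_all_lt (ht.comp (Primrec.fst.comp Primrec.fst)) (pp_imp ?_ ?_)
        · exact Primrec.nat_le.comp
            (hm.comp (Primrec.fst.comp (Primrec.fst.comp Primrec.fst))) Primrec.snd
        · exact Primrec.eq.comp
            (Primrec.list_getElem?.comp (Primrec.snd.comp Primrec.fst) Primrec.snd)
            (Primrec.list_getElem?.comp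
              (Primrec.snd.comp (Primrec.fst.comp Primrec.fst)) Primrec.snd)

theorem compactness_X (g : ℕ → List (List (ℕ × A))) (hne : ∃ x, InX g x) (T : ℕ) :
    ∃ t, T ≤ t ∧ ∀ y : List A, y.length = t → SatW g t y →
      ∃ x, InX g x ∧ ∀ i < T, y[i]? = some (x i) := by
  by_contra hcon
  push Not at hcon
  obtain ⟨x0, hx0⟩ := hne
  let _ : TopologicalSpace A := ⊥
  have : DiscreteTopology A := ⟨rfl⟩
  let K : ℕ → Set (ℕ → A) := fun t =>
    {x | (∀ u < t, ∀ q ∈ g u, ∃ p ∈ q, t ≤ p.1 ∨ x p.1 ≠ p.2) ∧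
      ∀ x', InX g x' → ∃ i < T, x i ≠ x' i}
  have hne_clopen : ∀ (i : ℕ) (a : A), IsClosed {x : ℕ → A | x i ≠ a} := fun i a =>
    (isClosed_discrete {b : A | b ≠ a}).preimage
      (continuous_apply (A := fun _ : ℕ => A) i)
  have hcl : ∀ t, IsClosed (K t) := by
    intro t
    refine IsClosed.inter (s₁ := {x : ℕ → A | ∀ u < t, ∀ q ∈ g u, ∃ p ∈ q, t ≤ p.1 ∨ x p.1 ≠ p.2})
      (s₂ := {x : ℕ → A | ∀ x', InX g x' → ∃ i < T, x i ≠ x' i}) ?_ ?_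
    · simp only [Set.ofPred_forall]
      refine isClosed_iInter fun u => isClosed_iInter fun _ => isClosed_iInter fun q =>
        isClosed_iInter fun _ => ?_
      have : {x : ℕ → A | ∃ p ∈ q, t ≤ p.1 ∨ x p.1 ≠ p.2} =
          ⋃ p ∈ {p | p ∈ q}, {x : ℕ → A | t ≤ p.1 ∨ x p.1 ≠ p.2} := by
        ext x; simp
      rw [this]
      refine Set.Finite.isClosed_biUnion (List.finite_toSet q) fun p _ => ?_
      by_cases hp : t ≤ p.1
      · simp [hp]
      · simpa [hp] using hne_clopen p.1 p.2
    · simp only [Set.ofPred_forall]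
      refine isClosed_iInter fun x' => isClosed_iInter fun _ => ?_
      have : {x : ℕ → A | ∃ i < T, x i ≠ x' i} =
          ⋃ i ∈ Set.Iio T, {x : ℕ → A | x i ≠ x' i} := by
        ext x; simp
      rw [this]
      exact Set.Finite.isClosed_biUnion (Set.finite_Iio T) fun i _ => hne_clopen _ _
  have hmono : ∀ n, K (n+1) ⊆ K n := by
    rintro n x ⟨h1, h2⟩
    refine ⟨fun u hu q hq => ?_, h2⟩
    obtain ⟨p, hp, h⟩ := h1 u (by omega) q hq
    exact ⟨p, hp, h.imp (fun h => by omega) id⟩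
  have hanti : Antitone K := antitone_nat_of_succ_le hmono
  have hnonempty : ∀ n, (K n).Nonempty := by
    intro n
    refine Set.Nonempty.mono (hanti (le_max_left n T)) ?_
    obtain ⟨y, hy, hs, hno⟩ := hcon (max n T) (le_max_right n T)
    refine ⟨fun i => (y[i]?).getD (x0 0), fun u hu q hq => ?_, fun x' hx' => ?_⟩
    · obtain ⟨p, hp, h⟩ := hs u hu q hq
      refine ⟨p, hp, ?_⟩
      by_cases hpt : max n T ≤ p.1
      · exact Or.inl hpt
      · right
        have hlt : p.1 < y.length := by omega
        simpa [List.getElem?_eq_getElem hlt] using h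
    · obtain ⟨i, hi, h⟩ := hno x' hx'
      refine ⟨i, hi, ?_⟩
      have hlt : i < y.length := by
        have := le_max_right n T
        omega
      simpa [List.getElem?_eq_getElem hlt] using h
  obtain ⟨x, hx⟩ := IsCompact.nonempty_iInter_of_sequence_nonempty_isCompact_isClosed K hmono
    hnonempty (hcl 0).isCompact hcl
  rw [Set.mem_iInter] at hx
  have hxX : InX g x := by
    intro u q hq
    by_contra hc
    push Not at hc
    obtain ⟨N, hN⟩ : ∃ N, ∀ p ∈ q, p.1 < N := by
      obtain ⟨N, hN⟩ := ((List.finite_toSet q).image Prod.fst).bddAbove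
      exact ⟨N + 1, fun p hp => Nat.lt_succ_of_le (hN ⟨p, hp, rfl⟩)⟩
    obtain ⟨p, hp, h⟩ := (hx (max (u+1) N)).1 u (by have := le_max_left (u+1) N; omega) q hq
    have h1 := hN p hp
    have h2 := hc p hp
    have := le_max_right (u+1) N
    rcases h with h | h
    · omega
    · exact h h2
  obtain ⟨i, _, h⟩ := (hx 0).2 x hxX
  exact h rfl

/-- The first `t` values of a point. -/
def cutX (x : ℕ → A) (t : ℕ) : List A := (List.range t).map x

theorem cutX_get (x : ℕ → A) (t i : ℕ) (hi : i < t) : (cutX x t)[i]? = some (x i) := by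
  simp [cutX, hi]

theorem cutX_get' (x : ℕ → A) (t i : ℕ) (a : A) (h : (cutX x t)[i]? = some a) : x i = a := by
  by_cases hi : i < t
  · rw [cutX_get x t i hi] at h; simpa using h
  · simp [cutX, hi] at h

theorem cutX_length (x : ℕ → A) (t : ℕ) : (cutX x t).length = t := by simp [cutX]

theorem cutX_sat {g : ℕ → List (List (ℕ × A))} {x : ℕ → A} (hx : InX g x) (t : ℕ) :
    SatW g t (cutX x t) := by
  intro u _ q hq
  obtain ⟨p, hp, h⟩ := hx u q hq
  exact ⟨p, hp, fun h' => h (cutX_get' _ _ _ _ h')⟩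

theorem list_fst_bound (l : List (ℕ × A)) : ∃ N, ∀ p ∈ l, p.1 < N := by
  obtain ⟨N, hN⟩ := ((List.finite_toSet l).image Prod.fst).bddAbove
  exact ⟨N + 1, fun p hp => Nat.lt_succ_of_le (hN ⟨p, hp, rfl⟩)⟩

theorem certN_iff (g : ℕ → List (List (ℕ × A))) (hne : ∃ x, InX g x) (l : List (ℕ × A)) :
    (∃ t, CertN g l t) ↔ ¬ AdmX g l := by
  constructor
  · rintro ⟨t, hl, h⟩ ⟨x, hx, hxl⟩
    refine h (cutX x t) ((mem_wordsOf _ _).2 (cutX_length x t)) ⟨cutX_sat hx t, fun p hp => ?_⟩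
    rw [cutX_get x t _ (hl p hp), hxl p hp]
  · intro hna
    obtain ⟨T, hT⟩ := list_fst_bound l
    obtain ⟨t, hTt, ht⟩ := compactness_X g hne T
    refine ⟨t, fun p hp => (hT p hp).trans_le hTt, fun y hy hys => hna ?_⟩
    obtain ⟨x, hx, hxy⟩ := ht y ((mem_wordsOf _ _).1 hy) hys.1
    refine ⟨x, hx, fun p hp => ?_⟩
    have h1 := hxy p.1 (hT p hp)
    rw [hys.2 p hp] at h1
    simpa using h1.symm

theorem certP_iff (g : ℕ → List (List (ℕ × A))) (nb : ℕ → List ℕ)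
    (hnb : ∀ u, ∀ q ∈ g u, ∀ p ∈ q, u ∈ nb p.1)
    (hne : ∃ x, InX g x)
    (hglue : ∀ l, AdmX g l → ∃ m, (∀ p ∈ l, p.1 < m) ∧ ∀ z, InX g z →
      ∃ x, InX g x ∧ (∀ p ∈ l, x p.1 = p.2) ∧ ∀ i, m ≤ i → x i = z i)
    (l : List (ℕ × A)) :
    (∃ m t, CertP g nb l m t) ↔ AdmX g l := by
  constructor
  · rintro ⟨m, t, hbd, h⟩
    obtain ⟨x, hx⟩ := hne
    obtain ⟨y', hy', ⟨hs, ha⟩, hout⟩ :=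
      h (cutX x t) ((mem_wordsOf _ _).2 (cutX_length x t)) (cutX_sat hx t)
    rw [mem_wordsOf] at hy'
    let x' : ℕ → A := fun i => (y'[i]?).getD (x i)
    have hsame : ∀ i, m ≤ i → x' i = x i := by
      intro i hi
      by_cases hit : i < t
      · simp [x', hout i hit hi, cutX_get x t i hit]
      · simp [x', List.getElem?_eq_none (show y'.length ≤ i by omega)]
    refine ⟨x', fun u q hq => ?_, fun p hp => by simp [x', ha p hp]⟩
    by_cases hmeet : ∃ p ∈ q, p.1 < m
    · obtain ⟨p, hp, hpm⟩ := hmeet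
      obtain ⟨hut, hall⟩ := hbd p.1 hpm u (hnb u q hq p hp)
      obtain ⟨p', hp', hne'⟩ := hs u hut q hq
      refine ⟨p', hp', ?_⟩
      have hlt : p'.1 < y'.length := by rw [hy']; exact hall q hq p' hp'
      simpa [x', List.getElem?_eq_getElem hlt] using hne'
    · push Not at hmeet
      obtain ⟨p, hp, h'⟩ := hx u q hq
      exact ⟨p, hp, by rw [hsame _ (hmeet p hp)]; exact h'⟩
  · intro hadm
    obtain ⟨m, hlm, hm⟩ := hglue l hadm
    obtain ⟨T, hT⟩ : ∃ T, ∀ w < m, ∀ u ∈ nb w, u < T ∧ ∀ q ∈ g u, ∀ p ∈ q, p.1 < T := by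
      have hfin : (⋃ w ∈ Set.Iio m, ⋃ u ∈ {u | u ∈ nb w}, ({u} ∪ ⋃ q ∈ {q | q ∈ g u},
          Prod.fst '' {p | p ∈ q})).Finite := by
        refine (Set.finite_Iio m).biUnion fun w _ => (List.finite_toSet _).biUnion fun u _ =>
          (Set.finite_singleton u).union ((List.finite_toSet _).biUnion fun q _ =>
            (List.finite_toSet q).image _)
      obtain ⟨N, hN⟩ := hfin.bddAbove
      refine ⟨N + 1, fun w hw u hu => ⟨Nat.lt_succ_of_le (hN ?_), fun q hq p hp =>
        Nat.lt_succ_of_le (hN ?_)⟩⟩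
      · simp only [Set.mem_iUnion]
        exact ⟨w, hw, u, hu, Or.inl rfl⟩
      · simp only [Set.mem_iUnion]
        refine ⟨w, hw, u, hu, Or.inr ?_⟩
        simp only [Set.mem_iUnion]
        exact ⟨q, hq, p, hp, rfl⟩
    obtain ⟨t, hTt, ht⟩ := compactness_X g hne (max m T)
    have hmT := le_max_left m T
    have hTT := le_max_right m T
    refine ⟨m, t, fun w hw u hu => ⟨?_, fun q hq p hp => ?_⟩, fun y hy hys => ?_⟩
    · have := (hT w hw u hu).1; omega
    · have := (hT w hw u hu).2 q hq p hp; omega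
    rw [mem_wordsOf] at hy
    obtain ⟨z, hz, hzy⟩ := ht y hy hys
    obtain ⟨x, hx, hxl, hxz⟩ := hm z hz
    let x' : ℕ → A := fun i => if i < max m T then x i else (y[i]?).getD (x i)
    have hout : ∀ i < t, m ≤ i → (cutX x' t)[i]? = y[i]? := by
      intro i hit hmi
      rw [cutX_get _ _ _ hit]
      by_cases hi : i < max m T
      · simp only [x', if_pos hi]
        rw [hzy i hi, hxz i hmi]
      · simp only [x', if_neg hi]
        simp [List.getElem?_eq_getElem (show i < y.length by omega)]
    refine ⟨cutX x' t, (mem_wordsOf _ _).2 (cutX_length x' t), ⟨fun u hu q hq => ?_,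
      fun p hp => ?_⟩, hout⟩
    · by_cases hmeet : ∃ p ∈ q, p.1 < m
      · obtain ⟨p, hp, hpm⟩ := hmeet
        obtain ⟨_, hall⟩ := hT p.1 hpm u (hnb u q hq p hp)
        obtain ⟨p', hp', hne'⟩ := hx u q hq
        refine ⟨p', hp', fun h' => hne' ?_⟩
        have h2 := cutX_get' _ _ _ _ h'
        have h3 := hall q hq p' hp'
        simp only [x', if_pos (show p'.1 < max m T by omega)] at h2
        exact h2
      · push Not at hmeet
        obtain ⟨p, hp, h'⟩ := hys u hu q hq
        refine ⟨p, hp, fun h'' => h' ?_⟩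
        by_cases hpt : p.1 < t
        · rw [← hout _ hpt (hmeet p hp)]; exact h''
        · rw [List.getElem?_eq_none (by rw [cutX_length]; omega)] at h''
          simp at h''
    · have := hlm p hp
      rw [cutX_get _ _ _ (by omega)]
      simp only [x', if_pos (show p.1 < max m T by omega), hxl p hp]

theorem core_decidable (g : ℕ → List (List (ℕ × A))) (hg : Primrec g) (nb : ℕ → List ℕ)
    (hnbp : Primrec nb)
    (hnb : ∀ u, ∀ q ∈ g u, ∀ p ∈ q, u ∈ nb p.1)
    (hne : ∃ x, InX g x)
    (hglue : ∀ l, AdmX g l → ∃ m, (∀ p ∈ l, p.1 < m) ∧ ∀ z, InX g z →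
      ∃ x, InX g x ∧ (∀ p ∈ l, x p.1 = p.2) ∧ ∀ i, m ≤ i → x i = z i) :
    ComputablePred (AdmX g) := by
  rw [ComputablePred.computable_iff_re_compl_re']
  constructor
  · refine (re_exists (R := fun l n => CertP g nb l n.unpair.1 n.unpair.2) (primrec_CertP hg hnbp)).of_eq fun l => ?_
    rw [← certP_iff g nb hnb hne hglue l]
    constructor
    · rintro ⟨n, h⟩; exact ⟨_, _, h⟩
    · rintro ⟨m, t, h⟩; exact ⟨Nat.pair m t, by simpa using h⟩
  · exact (re_exists (primrec_CertN hg)).of_eq (certN_iff g hne)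

end Core

section Concrete

theorem int_enc_ofNat (n : ℕ) : Encodable.encode (Int.ofNat n) = 2 * n := rfl
theorem int_enc_negSucc (n : ℕ) : Encodable.encode (Int.negSucc n) = 2 * n + 1 := rfl

theorem primrec_int_succ : Primrec (fun z : ℤ => z + 1) := by
  refine Primrec.encode_iff.1 ?_
  have h : Primrec (fun n : ℕ => if n % 2 = 0 then n + 2 else if n = 1 then 0 else n - 2) :=
    Primrec.ite (Primrec.eq.comp (Primrec.nat_mod.comp Primrec.id (Primrec.const 2))
        (Primrec.const 0))
      (Primrec.nat_add.comp Primrec.id (Primrec.const 2))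
      (Primrec.ite (Primrec.eq.comp Primrec.id (Primrec.const 1)) (Primrec.const 0)
        (Primrec.nat_sub.comp Primrec.id (Primrec.const 2)))
  refine (h.comp (Primrec.encode (α := ℤ))).of_eq fun z => ?_
  rcases z with n | n
  · have : Int.ofNat n + 1 = Int.ofNat (n + 1) := rfl
    rw [this, int_enc_ofNat, int_enc_ofNat, if_pos (by omega)]
    omega
  · rw [int_enc_negSucc, if_neg (by omega)]
    cases n with
    | zero => rfl
    | succ n =>
      have : Int.negSucc (n + 1) + 1 = Int.negSucc n := rfl
      rw [this, int_enc_negSucc, if_neg (by omega)]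
      omega

theorem primrec_int_pred : Primrec (fun z : ℤ => z - 1) := by
  refine Primrec.encode_iff.1 ?_
  have h : Primrec (fun n : ℕ => if n % 2 = 1 then n + 2 else if n = 0 then 1 else n - 2) :=
    Primrec.ite (Primrec.eq.comp (Primrec.nat_mod.comp Primrec.id (Primrec.const 2))
        (Primrec.const 1))
      (Primrec.nat_add.comp Primrec.id (Primrec.const 2))
      (Primrec.ite (Primrec.eq.comp Primrec.id (Primrec.const 0)) (Primrec.const 1)
        (Primrec.nat_sub.comp Primrec.id (Primrec.const 2)))
  refine (h.comp (Primrec.encode (α := ℤ))).of_eq fun z => ?_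
  rcases z with n | n
  · rw [int_enc_ofNat, if_neg (by omega)]
    cases n with
    | zero => rfl
    | succ n =>
      have : Int.ofNat (n + 1) - 1 = Int.ofNat n := by simp
      rw [this, int_enc_ofNat, if_neg (by omega)]
      omega
  · have : Int.negSucc n - 1 = Int.negSucc (n + 1) := rfl
    rw [this, int_enc_negSucc, int_enc_negSucc, if_pos (by omega)]
    omega

theorem primrec_int_add (c : ℤ) : Primrec (fun z : ℤ => z + c) := by
  induction c with
  | zero => exact Primrec.id.of_eq fun z => by simp
  | succ n ih => exact (primrec_int_succ.comp ih).of_eq fun z => by ring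
  | pred n ih => exact (primrec_int_pred.comp ih).of_eq fun z => by ring

theorem primrec_vec_add {d : ℕ} (c : Fin d → ℤ) : Primrec (fun v : Fin d → ℤ => v + c) := by
  rw [Primrec.fin_curry]
  have h : Primrec₂ (fun (i : Fin d) (v : Fin d → ℤ) => v i + c i) := by
    rw [Primrec.fin_curry₁]
    intro i
    exact (primrec_int_add (c i)).comp (Primrec.fin_app.comp Primrec.id (Primrec.const i))
  exact h.comp Primrec.snd Primrec.fst

variable {A : Type} [Fintype A] [Primcodable A] {d : ℕ}

/-- The code of a site, for the computability structure on sites. -/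
def encV {d : ℕ} (v : Fin d → ℤ) : ℕ :=
  @Encodable.encode (Fin d → ℤ) Primcodable.toEncodable v

/-- The site with a given code. -/
def decV {d : ℕ} (n : ℕ) : Option (Fin d → ℤ) :=
  @Encodable.decode₂ (Fin d → ℤ) Primcodable.toEncodable n

@[simp]
theorem decV_encV (v : Fin d → ℤ) : decV (encV v) = some v :=
  @Encodable.encodek₂ (Fin d → ℤ) Primcodable.toEncodable v

theorem decV_eq_some {n : ℕ} {v : Fin d → ℤ} : decV n = some v ↔ encV v = n :=
  @Encodable.decode₂_eq_some (Fin d → ℤ) Primcodable.toEncodable n v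

theorem encV_injective : Function.Injective (encV : (Fin d → ℤ) → ℕ) :=
  @Encodable.encode_injective (Fin d → ℤ) Primcodable.toEncodable

theorem primrec_encV : Primrec (encV : (Fin d → ℤ) → ℕ) := Primrec.encode

theorem primrec_decV : Primrec (decV : ℕ → Option (Fin d → ℤ)) := Primrec.decode₂

/-- Translated and coded forbidden patterns. -/
def codeG (bad : List (List ((Fin d → ℤ) × A))) (n : ℕ) : List (List (ℕ × A)) :=
  (((decV n : Option (Fin d → ℤ))).map fun u =>
    bad.map fun q => q.map fun p => (encV (u + p.1), p.2)).getD []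

theorem primrec_codeG (bad : List (List ((Fin d → ℤ) × A))) : Primrec (codeG bad) := by
  refine Primrec.option_getD.comp (Primrec.option_map primrec_decV ?_) (Primrec.const [])
  have h : Primrec fun u : Fin d → ℤ =>
      bad.map fun q => q.map fun p => (encV (u + p.1), p.2) :=
    pp_map_const bad fun q => pp_map_const q fun p =>
      Primrec.pair (primrec_encV.comp (primrec_vec_add p.1)) (Primrec.const p.2)
  exact h.comp Primrec.snd

theorem codeG_encode (bad : List (List ((Fin d → ℤ) × A))) (u : Fin d → ℤ) :
    codeG bad (encV u) = bad.map fun q => q.map fun p => (encV (u + p.1), p.2) := by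
  simp [codeG]

theorem codeG_mem (bad : List (List ((Fin d → ℤ) × A))) (n : ℕ) (q : List (ℕ × A))
    (h : q ∈ codeG bad n) : ∃ u : Fin d → ℤ, encV u = n ∧
      ∃ q' ∈ bad, q = q'.map fun p => (encV (u + p.1), p.2) := by
  unfold codeG at h
  cases hu : (decV n : Option (Fin d → ℤ)) with
  | none => simp [hu] at h
  | some u =>
    refine ⟨u, decV_eq_some.1 hu, ?_⟩
    simp only [hu, Option.map_some, Option.getD_some, List.mem_map] at h
    obtain ⟨q', h1, h2⟩ := h
    exact ⟨q', h1, h2.symm⟩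

/-- Codes of the translations whose window meets a given site. -/
def codeNb (F : List (Fin d → ℤ)) (n : ℕ) : List ℕ :=
  (((decV n : Option (Fin d → ℤ))).map fun w => F.map fun f => encV (w + (-f))).getD []

theorem primrec_codeNb (F : List (Fin d → ℤ)) : Primrec (codeNb F) := by
  refine Primrec.option_getD.comp (Primrec.option_map primrec_decV ?_) (Primrec.const [])
  have h : Primrec fun w : Fin d → ℤ => F.map fun f => encV (w + (-f)) :=
    pp_map_const F fun f => primrec_encV.comp (primrec_vec_add (-f))
  exact h.comp Primrec.snd

theorem inX_codeG (bad : List (List ((Fin d → ℤ) × A))) (x : ℕ → A) :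
    InX (codeG bad) x ↔ ∀ u : Fin d → ℤ, ∀ q ∈ bad, ∃ p ∈ q, x (encV (u + p.1)) ≠ p.2 := by
  constructor
  · intro h u q hq
    obtain ⟨p, hp, hne⟩ := h (encV u) (q.map fun p => (encV (u + p.1), p.2))
      (by rw [codeG_encode]; exact List.mem_map.2 ⟨q, hq, rfl⟩)
    obtain ⟨p', hp', rfl⟩ := List.mem_map.1 hp
    exact ⟨p', hp', hne⟩
  · intro h n q hq
    obtain ⟨u, rfl, q', hq', rfl⟩ := codeG_mem _ _ _ hq
    obtain ⟨p, hp, hne⟩ := h u q' hq'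
    exact ⟨_, List.mem_map.2 ⟨p, hp, rfl⟩, hne⟩

theorem concrete_decidable (X : Set ((Fin d → ℤ) → A)) (bad : List (List ((Fin d → ℤ) × A)))
    (F : List (Fin d → ℤ)) (hF : ∀ q ∈ bad, ∀ p ∈ q, p.1 ∈ F)
    (hX : ∀ x, x ∈ X ↔ ∀ u : Fin d → ℤ, ∀ q ∈ bad, ∃ p ∈ q, x (u + p.1) ≠ p.2)
    (hne : X.Nonempty) (hirr : IrreducibleShift X) :
    ComputablePred fun l : List ((Fin d → ℤ) × A) => ∃ x ∈ X, ∀ p ∈ l, x p.1 = p.2 := by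
  have hXX : ∀ x : ℕ → A, InX (codeG bad) x ↔ (fun v : Fin d → ℤ => x (encV v)) ∈ X := by
    intro x
    rw [inX_codeG, hX]
  -- merging a point of `X` with arbitrary values at the positions which are not codes
  have hmerge : ∀ (y : (Fin d → ℤ) → A) (x : ℕ → A), ∃ z : ℕ → A,
      (∀ v, z (encV v) = y v) ∧ ∀ n, (∀ v : Fin d → ℤ, encV v ≠ n) → z n = x n := by
    intro y x
    refine ⟨fun n => (((decV n : Option (Fin d → ℤ))).map y).getD (x n), fun v => by simp, fun n hn => ?_⟩
    cases hu : (decV n : Option (Fin d → ℤ)) with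
    | none => simp [hu]
    | some u => exact absurd (decV_eq_some.1 hu) (hn u)
  have hne' : ∃ x, InX (codeG bad) x := by
    obtain ⟨y, hy⟩ := hne
    obtain ⟨z, hz, _⟩ := hmerge y (fun _ => y 0)
    refine ⟨z, (hXX z).2 ?_⟩
    simpa only [hz] using hy
  have hnb : ∀ u, ∀ q ∈ codeG bad u, ∀ p ∈ q, u ∈ codeNb F p.1 := by
    intro n q hq p hp
    obtain ⟨u, rfl, q', hq', rfl⟩ := codeG_mem _ _ _ hq
    obtain ⟨p', hp', rfl⟩ := List.mem_map.1 hp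
    simp only [codeNb, decV_encV, Option.map_some, Option.getD_some, List.mem_map]
    exact ⟨p'.1, hF q' hq' p' hp', by simp⟩
  have hglue : ∀ l, AdmX (codeG bad) l → ∃ m, (∀ p ∈ l, p.1 < m) ∧ ∀ z, InX (codeG bad) z →
      ∃ x, InX (codeG bad) x ∧ (∀ p ∈ l, x p.1 = p.2) ∧ ∀ i, m ≤ i → x i = z i := by
    rintro l ⟨x, hx, hxl⟩
    obtain ⟨r, hr, hgl⟩ := hirr
    obtain ⟨m0, hm0⟩ := list_fst_bound l
    let E₁ : Set (Fin d → ℤ) := {v | ∃ p ∈ l, encV v = p.1}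
    have hE₁ : E₁.Finite := by
      have h1 : (Prod.fst '' {p | p ∈ l}).Finite := (List.finite_toSet l).image _
      refine (h1.preimage (f := (encV : (Fin d → ℤ) → ℕ))
        (encV_injective.injOn)).subset ?_
      rintro v ⟨p, hp, h⟩
      exact ⟨p, hp, h.symm⟩
    have hS : (⋃ u ∈ E₁, Set.Icc (fun i => u i - (r : ℤ)) (fun i => u i + (r : ℤ))).Finite :=
      hE₁.biUnion fun u _ => Set.finite_Icc _ _
    obtain ⟨N, hN⟩ := (hS.image (encV : (Fin d → ℤ) → ℕ)).bddAbove
    refine ⟨max m0 (N + 1), fun p hp => (hm0 p hp).trans_le (le_max_left _ _), fun z hz => ?_⟩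
    set m := max m0 (N + 1) with hm
    have hmN : N + 1 ≤ m := le_max_right _ _
    obtain ⟨y, hyX, hy1, hy2⟩ := hgl E₁ {v | m ≤ encV v} (fun v => x (encV v))
      (fun v => z (encV v)) (by
        intro u hu v hv
        by_contra hc
        push Not at hc
        have : encV v ≤ N := by
          refine hN ⟨v, ?_, rfl⟩
          simp only [Set.mem_iUnion]
          refine ⟨u, hu, fun i => ?_, fun i => ?_⟩
          · have := abs_lt.1 (hc i)
            show u i - (r : ℤ) ≤ v i
            omega
          · have := abs_lt.1 (hc i)
            show v i ≤ u i + (r : ℤ)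
            omega
        have hv' : m ≤ encV v := hv
        omega)
      ⟨_, (hXX x).1 hx, fun _ _ => rfl⟩ ⟨_, (hXX z).1 hz, fun _ _ => rfl⟩
    obtain ⟨w, hw1, hw2⟩ := hmerge y (fun n => if n < m then x n else z n)
    refine ⟨w, (hXX w).2 (by simpa only [hw1] using hyX), fun p hp => ?_, fun i hi => ?_⟩
    · by_cases hc : ∃ v : Fin d → ℤ, encV v = p.1
      · obtain ⟨v, hv⟩ := hc
        rw [← hv, hw1, hy1 v ⟨p, hp, hv⟩, ← hxl p hp, hv]
      · push Not at hc
        have hlt : p.1 < m := (hm0 p hp).trans_le (le_max_left _ _)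
        rw [hw2 _ hc]
        simp only [if_pos hlt]
        exact hxl p hp
    · by_cases hc : ∃ v : Fin d → ℤ, encV v = i
      · obtain ⟨v, rfl⟩ := hc
        rw [hw1, hy2 v hi]
      · push Not at hc
        rw [hw2 _ hc]
        simp only [if_neg (show ¬ i < m by omega)]
  have hcore := core_decidable (codeG bad) (primrec_codeG bad) (codeNb F) (primrec_codeNb F)
    hnb hne' hglue
  have hmap : Computable fun l : List ((Fin d → ℤ) × A) =>
      l.map fun p => ((encV p.1 : ℕ), p.2) :=
    (Primrec.list_map Primrec.id (Primrec.pair (primrec_encV.comp (Primrec.fst.comp Primrec.snd))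
      (Primrec.snd.comp Primrec.snd)).to₂).to_comp
  obtain ⟨f, hf, hfe⟩ := ComputablePred.computable_iff.1 hcore
  refine ComputablePred.computable_iff.2 ⟨fun l => f (l.map fun p => ((encV p.1 : ℕ), p.2)),
    hf.comp hmap, ?_⟩
  funext l
  have h1 := congrFun hfe (l.map fun p => ((encV p.1 : ℕ), p.2))
  rw [← h1]
  refine propext ⟨?_, ?_⟩
  · rintro ⟨y, hy, hyl⟩
    obtain ⟨z, hz, _⟩ := hmerge y (fun _ => y 0)
    refine ⟨z, (hXX z).2 (by simpa only [hz] using hy), fun p hp => ?_⟩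
    obtain ⟨p', hp', rfl⟩ := List.mem_map.1 hp
    exact (hz _).trans (hyl p' hp')
  · rintro ⟨z, hz, hzl⟩
    exact ⟨_, (hXX z).1 hz, fun p hp => hzl _ (List.mem_map.2 ⟨p, hp, rfl⟩)⟩

end Concrete

/-- For a nonempty irreducible SFT, global admissibility of finite patterns is decidable.
A finite pattern `(E, a)` is effectively coded by the list of pairs `(v, a v)`, `v ∈ E`
(its graph); the computable function `f` decides, given such a code, whether some point
of `X` agrees with it. -/
theorem globally_admissible_decidable (d : ℕ) (hd : 1 ≤ d) (A : Type) [Fintype A]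
    [Primcodable A] (X : Set ((Fin d → ℤ) → A)) (hSFT : IsSFT X) (hne : X.Nonempty)
    (hirr : IrreducibleShift X) :
    ∃ f : List ((Fin d → ℤ) × A) → Bool, Computable f ∧
      ∀ l : List ((Fin d → ℤ) × A),
        f l = true ↔ ∃ x ∈ X, ∀ p ∈ l, x p.1 = p.2 := by
  classical
  obtain ⟨F, L, hL⟩ := hSFT
  let toPat : (F → A) → List ((Fin d → ℤ) × A) := fun q =>
    (Finset.univ : Finset F).toList.map fun v : F => ((v : Fin d → ℤ), q v)
  have hmem : ∀ (q : F → A) (v : F), ((v : Fin d → ℤ), q v) ∈ toPat q := fun q v =>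
    List.mem_map.2 ⟨v, by simp, rfl⟩
  have hmem' : ∀ (q : F → A), ∀ p ∈ toPat q, ∃ v : F, p = ((v : Fin d → ℤ), q v) := by
    intro q p hp
    obtain ⟨v, _, rfl⟩ := List.mem_map.1 hp
    exact ⟨v, rfl⟩
  let bad : List (List ((Fin d → ℤ) × A)) :=
    ((Finset.univ.filter fun q : F → A => q ∉ L).toList).map toPat
  have hdec := concrete_decidable X bad F.toList (by
      intro q hq p hp
      obtain ⟨q', _, rfl⟩ := List.mem_map.1 hq
      obtain ⟨v, rfl⟩ := hmem' q' p hp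
      simp) (by
      intro x
      rw [hL]
      simp only [Set.mem_setOf_eq]
      refine forall_congr' fun u => ?_
      constructor
      · intro h q hq
        obtain ⟨q', hq', rfl⟩ := List.mem_map.1 hq
        have hq'L : q' ∉ L := by simpa using hq'
        by_contra hc
        push Not at hc
        refine hq'L ?_
        have : q' = fun v : F => x ((v : Fin d → ℤ) + u) := by
          funext v
          have := hc _ (hmem q' v)
          rw [add_comm]
          exact this.symm
        rw [this]
        exact h
      · intro h
        by_contra hc
        obtain ⟨p, hp, hpne⟩ := h (toPat fun v : F => x ((v : Fin d → ℤ) + u))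
          (List.mem_map.2 ⟨_, by simpa using hc, rfl⟩)
        obtain ⟨v, rfl⟩ := hmem' _ p hp
        exact hpne (by rw [add_comm])) hne hirr
  obtain ⟨f, hf, hfe⟩ := ComputablePred.computable_iff.1 hdec
  exact ⟨f, hf, fun l => by rw [← congrFun hfe l]⟩
end

section
/- Define finite sets I_n ⊆ ℕ by I_1 = {1,2,4,5} and I_{n+1} = I_n ∪ (I_n + 5^n) ∪ (I_n + 3·5^n) ∪ (I_n + 4·5^n). Then for every n ≥ 1 there exists a finite set S ⊆ I_{2^{3n}+1} which is a complete set of residues modulo 2^n, i.e. for every integer j with 0 ≤ j < 2^n there is exactly one s ∈ S with s ≡ j (mod 2^n). -/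
/-- The sets `I_n ⊆ ℕ`, defined by `I_1 = {1,2,4,5}` and
`I_{n+1} = I_n ∪ (I_n + 5^n) ∪ (I_n + 3·5^n) ∪ (I_n + 4·5^n)`  (`I_0` is irrelevant). -/
def Iset : ℕ → Finset ℕ
  | 0 => ∅
  | 1 => {1, 2, 4, 5}
  | n + 2 =>
      Iset (n + 1) ∪ (Iset (n + 1)).image (· + 5 ^ (n + 1)) ∪
        (Iset (n + 1)).image (· + 3 * 5 ^ (n + 1)) ∪
        (Iset (n + 1)).image (· + 4 * 5 ^ (n + 1))

lemma Iset_step (m : ℕ) (s : ℕ) (hs : s ∈ Iset m) : s ∈ Iset (m + 1) := by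
  cases m with
  | zero => simp [Iset] at hs
  | succ m => simp only [Iset, Finset.mem_union]; tauto

lemma Iset_mono' {a b : ℕ} (h : a ≤ b) : Iset a ⊆ Iset b := by
  induction h with
  | refl => exact fun _ h => h
  | step _ ih => exact fun s hs => Iset_step _ s (ih hs)

lemma Iset_add (m : ℕ) (hm : 1 ≤ m) (s : ℕ) (hs : s ∈ Iset m) : s + 5 ^ m ∈ Iset (m + 1) := by
  obtain ⟨m, rfl⟩ : ∃ k, m = k + 1 := ⟨m - 1, by omega⟩
  simp only [Iset, Finset.mem_union, Finset.mem_image]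
  exact Or.inl (Or.inl (Or.inr ⟨s, hs, rfl⟩))

lemma Iset_cover (N t : ℕ) (ht : 1 ≤ t) (h5 : 5 ^ t ≡ 1 [MOD N]) (k : ℕ) :
    ∀ r ≤ k, ∃ s ∈ Iset (t * k + 1), s ≡ 1 + r [MOD N] := by
  induction k with
  | zero =>
    intro r hr
    obtain rfl : r = 0 := by omega
    exact ⟨1, by simp [Iset], Nat.ModEq.refl _⟩
  | succ k ih =>
    intro r hr
    have hle : t * k + 1 ≤ t * (k + 1) := by rw [Nat.mul_succ]; omega
    rcases Nat.eq_zero_or_pos r with rfl | hr0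
    · obtain ⟨s, hs, h⟩ := ih 0 (Nat.zero_le _)
      exact ⟨s, Iset_mono' (by omega) hs, h⟩
    · obtain ⟨s, hs, h⟩ := ih (r - 1) (by omega)
      refine ⟨s + 5 ^ (t * (k + 1)), Iset_add _ (by omega) _ (Iset_mono' hle hs), ?_⟩
      have h1 : 5 ^ (t * (k + 1)) ≡ 1 [MOD N] := by
        rw [pow_mul]; simpa using h5.pow (k + 1)
      have := h.add h1
      rwa [show 1 + (r - 1) + 1 = 1 + r by omega] at this

/-- For every `n ≥ 1` there is a subset of `I_{2^{3n}+1}` which is a complete set of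
residues modulo `2^n`. -/
theorem Iset_contains_complete_residues (n : ℕ) (hn : 1 ≤ n) :
    ∃ S : Finset ℕ, S ⊆ Iset (2 ^ (3 * n) + 1) ∧
      ∀ j : ℕ, j < 2 ^ n → ∃! s : ℕ, s ∈ S ∧ s % 2 ^ n = j := by
  have hpos : 0 < 2 ^ n := by positivity
  have h5 : 5 ^ Nat.totient (2 ^ n) ≡ 1 [MOD 2 ^ n] :=
    Nat.ModEq.pow_totient (Nat.Coprime.pow_right n (by norm_num))
  have ht : 1 ≤ Nat.totient (2 ^ n) := Nat.totient_pos.2 hpos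
  have hle : Nat.totient (2 ^ n) * 2 ^ n + 1 ≤ 2 ^ (3 * n) + 1 := by
    have h1 : Nat.totient (2 ^ n) * 2 ^ n ≤ 2 ^ n * 2 ^ n :=
      Nat.mul_le_mul_right _ (Nat.totient_le _)
    have h2 : 2 ^ n * 2 ^ n ≤ 2 ^ (3 * n) := by
      rw [← pow_add]; exact Nat.pow_le_pow_right (by norm_num) (by omega)
    omega
  have key : ∀ j : ℕ, ∃ s, j < 2 ^ n → s ∈ Iset (2 ^ (3 * n) + 1) ∧ s % 2 ^ n = j := by
    intro j
    by_cases hj : j < 2 ^ n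
    · have : ∃ r ≤ 2 ^ n, 1 + r ≡ j [MOD 2 ^ n] := by
        rcases Nat.eq_zero_or_pos j with rfl | h0
        · refine ⟨2 ^ n - 1, by omega, ?_⟩
          rw [show 1 + (2 ^ n - 1) = 2 ^ n by omega]
          simp [Nat.ModEq]
        · exact ⟨j - 1, by omega, by rw [show 1 + (j - 1) = j by omega]⟩
      obtain ⟨r, hr, hrj⟩ := this
      obtain ⟨s, hs, h⟩ := Iset_cover _ _ ht h5 (2 ^ n) r hr
      refine ⟨s, fun _ => ⟨Iset_mono' hle hs, ?_⟩⟩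
      have h3 : s % 2 ^ n = j % 2 ^ n := h.trans hrj
      rw [h3, Nat.mod_eq_of_lt hj]
    · exact ⟨0, fun h => absurd h hj⟩
  choose f hf using key
  refine ⟨(Finset.range (2 ^ n)).image f, ?_, ?_⟩
  · intro s hs
    obtain ⟨j, hj, rfl⟩ := Finset.mem_image.1 hs
    exact (hf j (Finset.mem_range.1 hj)).1
  · intro j hj
    refine ⟨f j, ⟨Finset.mem_image_of_mem f (Finset.mem_range.2 hj), (hf j hj).2⟩, ?_⟩
    rintro s ⟨hs, hsj⟩
    obtain ⟨i, hi, rfl⟩ := Finset.mem_image.1 hs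
    have := (hf i (Finset.mem_range.1 hi)).2
    rw [← hsj, this]
end

section
/- Let (a_n)_{n≥1} be integers such that the sets U_n = a_n + 2^nℤ are pairwise disjoint, let ρ_n ∈ {0,1} for each n ≥ 1, and let c : ℤ → {0,1} be any function satisfying c(u) = ρ_n for all u ∈ U_n and all n ≥ 1. Let N ≥ 1 and let S ⊆ ℤ be a complete set of residues modulo 2^N. Then |(1/2^N) · #{s ∈ S : c(s) = 1} − Σ_{n=1}^{∞} ρ_n 2^{−n}| ≤ 2^{−N}. -/
lemma aux_card (N : ℕ) (S : Finset ℤ)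
    (hS : ∀ j : ℤ, 0 ≤ j → j < 2 ^ N → ∃! s : ℤ, s ∈ S ∧ (2 : ℤ) ^ N ∣ s - j)
    (d M : ℕ) (h : d + M = N) (b : ℤ) :
    (S.filter fun s => (2 : ℤ) ^ d ∣ s - b).card = 2 ^ M := by
  have hpow : (2 : ℤ) ^ N = 2 ^ d * 2 ^ M := by rw [← h, pow_add]
  have hd : (2 : ℤ) ^ d ≠ 0 := by positivity
  have hMpos : (0 : ℤ) < 2 ^ M := by positivity
  have hNpos : (0 : ℤ) < 2 ^ N := by positivity
  have hT : ∀ t : ℤ, ∃ s : ℤ, (s ∈ S ∧ (2 : ℤ) ^ N ∣ s - t) ∧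
      ∀ r : ℤ, r ∈ S → (2 : ℤ) ^ N ∣ r - t → r = s := by
    intro t
    obtain ⟨s, ⟨hs, hd1⟩, hu⟩ := hS (t % 2 ^ N) (Int.emod_nonneg _ hNpos.ne')
      (Int.emod_lt_of_pos _ hNpos)
    have ht : (2 : ℤ) ^ N ∣ t - t % 2 ^ N := Int.dvd_self_sub_emod
    refine ⟨s, ⟨hs, ?_⟩, fun r hr hrt => hu r ⟨hr, ?_⟩⟩
    · have := dvd_sub hd1 ht
      ring_nf at this ⊢
      exact this
    · have := dvd_add hrt ht
      ring_nf at this ⊢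
      exact this
  choose f hf hu using hT
  rw [← Finset.card_range (2 ^ M)]
  symm
  refine Finset.card_bij (fun k _ => f (b + 2 ^ d * (k : ℤ))) ?_ ?_ ?_
  · intro k _
    rw [Finset.mem_filter]
    refine ⟨(hf _).1, ?_⟩
    obtain ⟨q, hq⟩ := (hf (b + 2 ^ d * (k : ℤ))).2
    refine ⟨2 ^ M * q + k, ?_⟩
    rw [hpow] at hq
    linear_combination hq
  · intro k hk l hl he
    simp only [Finset.mem_range] at hk hl
    have h1 := (hf (b + 2 ^ d * (k : ℤ))).2
    have h2 := (hf (b + 2 ^ d * (l : ℤ))).2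
    rw [he] at h1
    have h3 := dvd_sub h2 h1
    rw [hpow, show f (b + 2 ^ d * (l : ℤ)) - (b + 2 ^ d * (l : ℤ)) -
      (f (b + 2 ^ d * (l : ℤ)) - (b + 2 ^ d * (k : ℤ))) = 2 ^ d * ((k : ℤ) - l) by ring] at h3
    have h4 := (mul_dvd_mul_iff_left hd).1 h3
    have h5 : (k : ℤ) - l = 0 := by
      apply Int.eq_zero_of_abs_lt_dvd h4
      have hk' : (k : ℤ) < 2 ^ M := by exact_mod_cast hk
      have hl' : (l : ℤ) < 2 ^ M := by exact_mod_cast hl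
      rw [abs_lt]
      constructor <;> omega
    omega
  · intro s hs
    rw [Finset.mem_filter] at hs
    obtain ⟨hs, q, hq⟩ := hs
    have h0 := Int.emod_nonneg q hMpos.ne'
    have h1 := Int.emod_lt_of_pos q hMpos
    have h2 : ((q % 2 ^ M).toNat : ℤ) = q % 2 ^ M := Int.toNat_of_nonneg h0
    refine ⟨(q % 2 ^ M).toNat, ?_, ?_⟩
    · rw [Finset.mem_range]
      rw [← h2] at h1
      exact_mod_cast h1
    · symm
      apply hu _ _ hs
      rw [h2]
      refine ⟨q / 2 ^ M, ?_⟩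
      have := Int.emod_add_mul_ediv q (2 ^ M)
      rw [hpow]
      linear_combination hq - 2 ^ d * this

/-- Let `U_n = a_n + 2^nℤ` (`n ≥ 1`) be pairwise disjoint cosets, let `ρ_n ∈ {0,1}`, and
let `c : ℤ → {0,1}` equal `ρ_n` on `U_n`.  If `S` is a complete set of residues modulo
`2^N` (`N ≥ 1`), then the relative frequency of `1`s of `c` on `S` differs from
`Σ_{n≥1} ρ_n 2^{-n}` by at most `2^{-N}`.  (Here the index `n : ℕ` stands for the level
`n+1`, so the modulus of the `n`-th coset is `2^{n+1}` and the series is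
`Σ_n ρ_{n+1} 2^{-(n+1)}`; the symbols `1`/`0` are rendered as `true`/`false`.) -/
theorem freq_on_complete_residues_close_to_density (a : ℕ → ℤ) (ρ : ℕ → Bool) (c : ℤ → Bool)
    (hdisj : ∀ m n : ℕ, m ≠ n → ∀ t : ℤ,
      ¬((2 : ℤ) ^ (m + 1) ∣ t - a m ∧ (2 : ℤ) ^ (n + 1) ∣ t - a n))
    (hc : ∀ (n : ℕ) (t : ℤ), (2 : ℤ) ^ (n + 1) ∣ t - a n → c t = ρ n)
    (N : ℕ) (hN : 1 ≤ N) (S : Finset ℤ)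
    (hS : ∀ j : ℤ, 0 ≤ j → j < 2 ^ N → ∃! s : ℤ, s ∈ S ∧ (2 : ℤ) ^ N ∣ s - j) :
    |((S.filter fun s => c s = true).card : ℝ) / 2 ^ N -
        ∑' n : ℕ, (if ρ n = true then ((2 : ℝ) ^ (n + 1))⁻¹ else 0)| ≤ ((2 : ℝ) ^ N)⁻¹ := by
  classical
  let U : ℕ → Finset ℤ := fun n => S.filter fun s => (2 : ℤ) ^ (n + 1) ∣ s - a n
  have hUc : ∀ n ∈ Finset.range N, (U n).card = 2 ^ (N - 1 - n) := by
    intro n hn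
    rw [Finset.mem_range] at hn
    exact aux_card N S hS (n + 1) (N - 1 - n) (by omega) (a n)
  have hSc : S.card = 2 ^ N := by
    have := aux_card N S hS 0 N (by omega) 0
    simpa using this
  have hUd : ∀ m n : ℕ, m ≠ n → Disjoint (U m) (U n) := by
    intro m n hmn
    rw [Finset.disjoint_left]
    intro t h1 h2
    exact hdisj m n hmn t ⟨(Finset.mem_filter.1 h1).2, (Finset.mem_filter.1 h2).2⟩
  let B : Finset ℤ := (Finset.range N).biUnion U
  have hBS : B ⊆ S := by
    intro x hx
    obtain ⟨n, _, h⟩ := Finset.mem_biUnion.1 hx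
    exact (Finset.mem_filter.1 h).1
  have hBc : B.card + 1 = 2 ^ N := by
    have h1 : B.card = ∑ n ∈ Finset.range N, 2 ^ (N - 1 - n) := by
      rw [Finset.card_biUnion (fun m _ n _ h => hUd m n h)]
      exact Finset.sum_congr rfl hUc
    rw [h1, Finset.sum_range_reflect (fun n => 2 ^ n) N]
    have := Nat.geomSum_eq (le_refl 2) N
    have h2 : 0 < 2 ^ N := by positivity
    simp only [Nat.add_one_sub_one, Nat.div_one] at this
    omega
  have hR : (S \ B).card = 1 := by
    rw [Finset.card_sdiff_of_subset hBS]; omega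
  have hBf : (B.filter fun s => c s = true).card =
      ∑ n ∈ Finset.range N, if ρ n = true then 2 ^ (N - 1 - n) else 0 := by
    have : (B.filter fun s => c s = true) =
        (Finset.range N).biUnion fun n => (U n).filter fun s => c s = true := by
      rw [Finset.filter_biUnion]
    rw [this, Finset.card_biUnion (fun m _ n _ h =>
      Finset.disjoint_filter_filter (hUd m n h))]
    refine Finset.sum_congr rfl fun n hn => ?_
    have hcU : ∀ s ∈ U n, c s = ρ n := fun s hs => hc n s (Finset.mem_filter.1 hs).2
    split_ifs with h
    · rw [Finset.filter_true_of_mem (fun s hs => by rw [hcU s hs, h]), hUc n hn]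
    · rw [Finset.filter_false_of_mem (fun s hs => by rw [hcU s hs]; exact h), Finset.card_empty]
  have hP : (S.filter fun s => c s = true).card =
      (B.filter fun s => c s = true).card + ((S \ B).filter fun s => c s = true).card := by
    rw [← Finset.card_union_of_disjoint
      (Finset.disjoint_filter_filter Finset.disjoint_sdiff), ← Finset.filter_union,
      Finset.union_sdiff_of_subset hBS]
  have he : ((S \ B).filter fun s => c s = true).card ≤ 1 := hR ▸ Finset.card_filter_le _ _
  set e := ((S \ B).filter fun s => c s = true).card
  have heR : (e : ℝ) ≤ 1 := by exact_mod_cast he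
  have he0 : (0 : ℝ) ≤ e := by positivity
  let g : ℕ → ℝ := fun n => if ρ n = true then ((2 : ℝ) ^ (n + 1))⁻¹ else 0
  have hgeo : HasSum (fun n : ℕ => ((2 : ℝ) ^ (n + 1))⁻¹) 1 := by
    have := hasSum_geometric_two' 1
    convert this using 2 with n
    rw [pow_succ]; field_simp
  have hg0 : ∀ n, 0 ≤ g n := fun n => by simp only [g]; split_ifs <;> positivity
  have hg1 : ∀ n, g n ≤ ((2 : ℝ) ^ (n + 1))⁻¹ := fun n => by
    simp only [g]; split_ifs
    · exact le_rfl
    · positivity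
  have hgs : Summable g := Summable.of_nonneg_of_le hg0 hg1 hgeo.summable
  have hsplit := hgs.sum_add_tsum_nat_add N
  have ht0 : 0 ≤ ∑' n, g (n + N) := tsum_nonneg fun n => hg0 _
  have ht1 : ∑' n, g (n + N) ≤ ((2 : ℝ) ^ N)⁻¹ := by
    have h1 : HasSum (fun n : ℕ => ((2 : ℝ) ^ N)⁻¹ * ((2 : ℝ) ^ (n + 1))⁻¹)
      (((2 : ℝ) ^ N)⁻¹ * 1) := hgeo.mul_left _
    rw [mul_one] at h1
    rw [← h1.tsum_eq]
    refine Summable.tsum_le_tsum (fun n => ?_) ((summable_nat_add_iff N).2 hgs) h1.summable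
    refine (hg1 _).trans (le_of_eq ?_)
    rw [← mul_inv, ← pow_add]
    congr 2
    omega
  have hmain : ((S.filter fun s => c s = true).card : ℝ) / 2 ^ N =
      ∑ n ∈ Finset.range N, g n + e * ((2 : ℝ) ^ N)⁻¹ := by
    rw [hP, hBf]
    push_cast
    rw [add_div, Finset.sum_div, div_eq_mul_inv (e : ℝ)]
    congr 1
    refine Finset.sum_congr rfl fun n hn => ?_
    rw [Finset.mem_range] at hn
    simp only [g]
    split_ifs
    · have : (2 : ℝ) ^ N = 2 ^ (N - 1 - n) * 2 ^ (n + 1) := by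
        rw [← pow_add]; congr 1; omega
      rw [this]
      field_simp
    · simp
  change |_ - ∑' n, g n| ≤ _
  rw [hmain, ← hsplit]
  have hi : (0 : ℝ) < ((2 : ℝ) ^ N)⁻¹ := by positivity
  have h1 : (e : ℝ) * ((2 : ℝ) ^ N)⁻¹ ≤ ((2 : ℝ) ^ N)⁻¹ := mul_le_of_le_one_left hi.le heR
  have h2 : 0 ≤ (e : ℝ) * ((2 : ℝ) ^ N)⁻¹ := by positivity
  rw [abs_le]
  constructor <;> linarith
end
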